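/- Let d = \sum_{\alpha\in S} (-1)^{p(\alpha)} \phi^\alpha u_\alpha + \sum_{\alpha\in S(1/2)} \phi^\alpha \Phi_\alpha + \phi^f + (1/2)\sum_{\alpha,\beta\in S} (-1)^{p(\alpha)} \phi^\alpha \phi^\beta \phi_{[u_\beta,u_\alpha]} be the element of the Poisson vertex algebra S(R). Then d has odd parity and satisfies {d_\lambda d} = 0. -/

import Mathlib

open Polynomial

noncomputable section

/-- A finite-dimensional Lie superalgebra `g` over `ℂ` together with an even
`sl₂`-triple `(e, h = 2x, f)` and a supersymmetric invariant bilinear form,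
normalised by `(e|f) = 2(x|x) = 1`.  The parity of `g` is encoded by the grading
involution `σg` (`σg a = a` for even `a` and `σg a = -a` for odd `a`). -/
structure SuperSetup (g : Type) [AddCommGroup g] [Module ℂ g] where
  lie : g →ₗ[ℂ] g →ₗ[ℂ] g
  σg : g →ₗ[ℂ] g
  σg_invol : ∀ a, σg (σg a) = a
  σg_lie : ∀ a b, σg (lie a b) = lie (σg a) (σg b)
  lie_skew : ∀ a b, (σg a = a ∨ σg b = b) → lie a b = - lie b a
  lie_skew_odd : ∀ a b, σg a = -a → σg b = -b → lie a b = lie b a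
  jacobi : ∀ a b c, (σg a = a ∨ σg b = b) →
    lie a (lie b c) = lie (lie a b) c + lie b (lie a c)
  jacobi_odd : ∀ a b c, σg a = -a → σg b = -b →
    lie a (lie b c) = lie (lie a b) c - lie b (lie a c)
  form : g →ₗ[ℂ] g →ₗ[ℂ] ℂ
  form_invariant : ∀ a b c, form (lie a b) c = form a (lie b c)
  form_super : ∀ a b, form (σg a) (σg b) = form a b
  e : g
  x : g
  f : g
  e_even : σg e = e
  x_even : σg x = x
  f_even : σg f = f
  lie_xe : lie x e = e
  lie_xf : lie x f = - f
  lie_ef : lie e f = (2 : ℂ) • x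
  form_ef : form e f = 1
  form_xx : form x x = 1 / 2

namespace SuperSetup

variable {g : Type} [AddCommGroup g] [Module ℂ g]

/-- The `ad x`-eigenspace `g(i)`. -/
def gwt (D : SuperSetup g) (i : ℚ) : Submodule ℂ g :=
  LinearMap.ker (D.lie D.x - (i : ℂ) • LinearMap.id)

/-- `n = ⊕_{i > 0} g(i)`. -/
def nplus (D : SuperSetup g) : Submodule ℂ g := ⨆ i : {i : ℚ // 0 < i}, D.gwt i
/-- `n₋ = ⊕_{i < 0} g(i)`. -/
def nminus (D : SuperSetup g) : Submodule ℂ g := ⨆ i : {i : ℚ // i < 0}, D.gwt i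
/-- `m = ⊕_{i ≥ 1} g(i)`. -/
def mm (D : SuperSetup g) : Submodule ℂ g := ⨆ i : {i : ℚ // 1 ≤ i}, D.gwt i
/-- `⊕_{i ≤ 0} g(i)`. -/
def gle (D : SuperSetup g) : Submodule ℂ g := ⨆ i : {i : ℚ // i ≤ 0}, D.gwt i
/-- `⊕_{i ≤ 1} g(i)`. -/
def gle1 (D : SuperSetup g) : Submodule ℂ g := ⨆ i : {i : ℚ // i ≤ 1}, D.gwt i
/-- `⊕_{i < 1} g(i)`. -/
def glt1 (D : SuperSetup g) : Submodule ℂ g := ⨆ i : {i : ℚ // i < 1}, D.gwt i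
/-- The centraliser `g^f = {a ∈ g | [a, f] = 0}`. -/
def gf (D : SuperSetup g) : Submodule ℂ g := LinearMap.ker (D.lie.flip D.f)

end SuperSetup

/-- `a` is a homogeneous element of parity sign `ε ∈ {1, -1}`. -/
def IsParity {g : Type} [AddCommGroup g] [Module ℂ g] (D : SuperSetup g)
    (a : g) (ε : ℂ) : Prop :=
  (ε = 1 ∧ D.σg a = a) ∨ (ε = -1 ∧ D.σg a = -a)

section PolyHelpers

variable {A : Type} [Ring A] [Algebra ℂ A]

/-- Apply the linear endomorphism `δ` to every coefficient of a polynomial. -/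
def cmap (δ : A →ₗ[ℂ] A) (P : Polynomial A) : Polynomial A :=
  P.sum fun n c => Polynomial.monomial n (δ c)

/-- Substitution `λ ↦ -λ - ∂` (with `∂ = δ` acting on the coefficients). -/
def oppSubst (δ : A →ₗ[ℂ] A) (P : Polynomial A) : Polynomial A :=
  P.sum fun n c => ∑ k ∈ Finset.range (n + 1),
    Polynomial.monomial k ((((-1 : ℂ) ^ n * (n.choose k : ℂ))) • ((δ ^ (n - k)) c))

/-- `[a_λ [b_μ c]]` as an element of `(A[λ])[μ]` (the outer variable is `μ`). -/
def jacLeft (Br : A →ₗ[ℂ] A →ₗ[ℂ] Polynomial A) (a : A) (P : Polynomial A) :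
    Polynomial (Polynomial A) :=
  P.sum fun m c => Polynomial.monomial m (Br a c)

/-- `[b_μ [a_λ c]]` as an element of `(A[λ])[μ]` (the outer variable is `μ`). -/
def jacRight (Br : A →ₗ[ℂ] A →ₗ[ℂ] Polynomial A) (b : A) (P : Polynomial A) :
    Polynomial (Polynomial A) :=
  P.sum fun n c => (Br b c).sum fun m d => Polynomial.monomial m (Polynomial.monomial n d)

/-- `Q(λ + μ)` as an element of `(A[λ])[μ]`. -/
def substAdd (Q : Polynomial A) : Polynomial (Polynomial A) :=
  Q.sum fun m c => ∑ k ∈ Finset.range (m + 1),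
    Polynomial.monomial k (Polynomial.monomial (m - k) ((m.choose k : ℂ) • c))

/-- `[[a_λ b]_{λ+μ} c]` as an element of `(A[λ])[μ]`. -/
def jacMid (Br : A →ₗ[ℂ] A →ₗ[ℂ] Polynomial A) (P : Polynomial A) (c : A) :
    Polynomial (Polynomial A) :=
  P.sum fun j d => Polynomial.C (Polynomial.X ^ j : Polynomial A) * substAdd (Br d c)

end PolyHelpers

/-- A Poisson vertex superalgebra structure on a unital associative `ℂ`-algebra `A`:
a supercommutative product (the parity being encoded by the involution `σ`), an even
derivation `δ = ∂`, and a `λ`-bracket `Br` (with values in `A[λ]`) satisfying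
sesquilinearity, skewsymmetry, the Jacobi identity and the Leibniz rules. -/
structure PVA (A : Type) [Ring A] [Algebra ℂ A] where
  σ : A →ₐ[ℂ] A
  σ_invol : ∀ a, σ (σ a) = a
  supercomm : ∀ a b : A, (σ a = a ∨ σ b = b) → a * b = b * a
  supercomm_odd : ∀ a b : A, σ a = -a → σ b = -b → a * b = -(b * a)
  δ : A →ₗ[ℂ] A
  δ_der : ∀ a b, δ (a * b) = δ a * b + a * δ b
  δ_even : ∀ a, σ (δ a) = δ (σ a)
  Br : A →ₗ[ℂ] A →ₗ[ℂ] Polynomial A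
  br_parity : ∀ a b n, σ ((Br a b).coeff n) = (Br (σ a) (σ b)).coeff n
  sesq_left : ∀ a b, Br (δ a) b = -(Polynomial.X * Br a b)
  sesq_right : ∀ a b, Br a (δ b) = Polynomial.X * Br a b + cmap δ (Br a b)
  leibniz : ∀ a b c, (σ a = a ∨ σ b = b) →
    Br a (b * c) = Polynomial.C b * Br a c + Br a b * Polynomial.C c
  leibniz_odd : ∀ a b c, σ a = -a → σ b = -b →
    Br a (b * c) = -(Polynomial.C b * Br a c) + Br a b * Polynomial.C c
  skew : ∀ a b, (σ a = a ∨ σ b = b) → Br a b = - oppSubst δ (Br b a)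
  skew_odd : ∀ a b, σ a = -a → σ b = -b → Br a b = oppSubst δ (Br b a)
  jac : ∀ a b c, (σ a = a ∨ σ b = b) →
    jacLeft Br a (Br b c) = jacMid Br (Br a b) c + jacRight Br b (Br a c)
  jac_odd : ∀ a b c, σ a = -a → σ b = -b →
    jacLeft Br a (Br b c) = jacMid Br (Br a b) c - jacRight Br b (Br a c)

/-- Dual bases `{u_α}, {u^α}` (indexed by `I = \bar S`) of the Lie superalgebra,
compatible with the parity and the `ad x`-grading, with `(u_α | u^β) = δ_{αβ}`. -/
structure BasisData {g : Type} [AddCommGroup g] [Module ℂ g] (D : SuperSetup g)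
    (I : Type) [Fintype I] [DecidableEq I] where
  u : I → g
  udual : I → g
  jdeg : I → ℚ
  par : I → Bool
  hu : ∀ α, u α ∈ D.gwt (jdeg α)
  hud : ∀ α, udual α ∈ D.gwt (-(jdeg α))
  hσu : ∀ α, D.σg (u α) = (if par α then (-1 : ℂ) else 1) • u α
  hσud : ∀ α, D.σg (udual α) = (if par α then (-1 : ℂ) else 1) • udual α
  hdual : ∀ α β, D.form (u α) (udual β) = if α = β then 1 else 0
  compl : ∀ a : g, (∑ α, D.form a (udual α) • u α) = a
  basisu : LinearIndependent ℂ u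
  spanu : Submodule.span ℂ (Set.range u) = ⊤

namespace BasisData

variable {g : Type} [AddCommGroup g] [Module ℂ g] {D : SuperSetup g}
  {I : Type} [Fintype I] [DecidableEq I]

/-- The index set `S` of the dual bases of `n` and `n₋`. -/
def S (Bs : BasisData D I) : Finset I := Finset.univ.filter fun α => 0 < Bs.jdeg α

/-- The index set `S(1/2)` of the basis of `g(1/2)`. -/
def Shalf (Bs : BasisData D I) : Finset I := Finset.univ.filter fun α => Bs.jdeg α = 1 / 2

/-- The sign `(-1)^{p(α)}`. -/
def sgn (Bs : BasisData D I) (α : I) : ℂ := if Bs.par α then -1 else 1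

/-- The projection of `g` onto `⊕_{i ≤ 0} g(i)` determined by the dual bases. -/
def πle (Bs : BasisData D I) (a : g) : g :=
  ∑ α ∈ Finset.univ.filter (fun α => Bs.jdeg α ≤ 0), D.form a (Bs.udual α) • Bs.u α

end BasisData

/-- A realization of the Poisson vertex algebra `S(R)` of the classical BRST complex,
where `R = Cur_k(g) ⊕ R_ch ⊕ R_ne`:  `ι` are the currents, `φc a = φ_{π₊ a}`,
`φd a = φ^{π₋ a}` are the charged free fermions and `Φn a = Φ_{π_{1/2} a}` are the
neutral free fermions, with the `λ`-brackets of the generators as in the paper. -/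
structure BRST {g : Type} [AddCommGroup g] [Module ℂ g] (D : SuperSetup g)
    {I : Type} [Fintype I] [DecidableEq I] (Bs : BasisData D I)
    {A : Type} [Ring A] [Algebra ℂ A] (P : PVA A) (k : ℂ) where
  ι : g →ₗ[ℂ] A
  φc : g →ₗ[ℂ] A
  φd : g →ₗ[ℂ] A
  Φn : g →ₗ[ℂ] A
  σι : ∀ a, P.σ (ι a) = ι (D.σg a)
  σφc : ∀ a, P.σ (φc a) = - φc (D.σg a)
  σφd : ∀ a, P.σ (φd a) = - φd (D.σg a)
  σΦ : ∀ a, P.σ (Φn a) = Φn (D.σg a)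
  φc_proj : ∀ i : ℚ, i ≤ 0 → ∀ a ∈ D.gwt i, φc a = 0
  φd_proj : ∀ i : ℚ, 0 ≤ i → ∀ a ∈ D.gwt i, φd a = 0
  Φn_proj : ∀ i : ℚ, i ≠ 1 / 2 → ∀ a ∈ D.gwt i, Φn a = 0
  br_cur : ∀ a b, P.Br (ι a) (ι b) =
    Polynomial.C (ι (D.lie a b)) + Polynomial.monomial 1 (algebraMap ℂ A (k * D.form a b))
  br_φφ : ∀ a b, P.Br (φc a) (φc b) = 0
  br_φdφd : ∀ a b, P.Br (φd a) (φd b) = 0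
  br_φφd : ∀ i j : ℚ, 0 < i → j < 0 → ∀ a ∈ D.gwt i, ∀ b ∈ D.gwt j,
    P.Br (φc a) (φd b) = Polynomial.C (algebraMap ℂ A (D.form a b))
  br_ΦΦ : ∀ a ∈ D.gwt (1 / 2 : ℚ), ∀ b ∈ D.gwt (1 / 2 : ℚ),
    P.Br (Φn a) (Φn b) = Polynomial.C (algebraMap ℂ A (D.form D.f (D.lie a b)))
  br_curφc : ∀ a b, P.Br (ι a) (φc b) = 0
  br_curφd : ∀ a b, P.Br (ι a) (φd b) = 0
  br_curΦ : ∀ a b, P.Br (ι a) (Φn b) = 0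
  br_φcΦ : ∀ a b, P.Br (φc a) (Φn b) = 0
  br_φdΦ : ∀ a b, P.Br (φd a) (Φn b) = 0

namespace BRST

variable {g : Type} [AddCommGroup g] [Module ℂ g] {D : SuperSetup g}
  {I : Type} [Fintype I] [DecidableEq I] {Bs : BasisData D I}
  {A : Type} [Ring A] [Algebra ℂ A] {P : PVA A} {k : ℂ}

/-- The element
`d = ∑_{α∈S} (-1)^{p(α)} φ^α u_α + ∑_{α∈S(1/2)} φ^α Φ_α + φ^f
  + (1/2) ∑_{α,β∈S} (-1)^{p(α)} φ^α φ^β φ_{[u_β, u_α]}` of `S(R)`. -/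
def dd (R : BRST D Bs P k) : A :=
  (∑ α ∈ Bs.S, Bs.sgn α • (R.φd (Bs.udual α) * R.ι (Bs.u α)))
    + (∑ α ∈ Bs.Shalf, R.φd (Bs.udual α) * R.Φn (Bs.u α))
    + R.φd D.f
    + (1 / 2 : ℂ) • ∑ α ∈ Bs.S, ∑ β ∈ Bs.S,
        Bs.sgn α • (R.φd (Bs.udual α) * (R.φd (Bs.udual β) * R.φc (D.lie (Bs.u β) (Bs.u α))))

/-- The differential `d_{(0)} : S(R) → S(R)`, `a ↦ {d_λ a}|_{λ=0}`. -/
def d0 (R : BRST D Bs P k) : A →ₗ[ℂ] A where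
  toFun a := (P.Br R.dd a).coeff 0
  map_add' a b := by simp
  map_smul' c a := by simp

/-- The building block `J_a = a + ∑_{α∈S} φ^α φ_{[u_α, a]}`. -/
def Jel (R : BRST D Bs P k) (a : g) : A :=
  R.ι a + ∑ α ∈ Bs.S, R.φd (Bs.udual α) * R.φc (D.lie (Bs.u α) a)

/-- The building block `K_a = J_{π_≤ a} - (-1)^{p(a)} Φ_a - (a|f)`
(for `a` homogeneous of parity sign `ε`). -/
def Kel (R : BRST D Bs P k) (a : g) (ε : ℂ) : A :=
  R.Jel (Bs.πle a) - ε • R.Φn a - algebraMap ℂ A (D.form a D.f)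

/-- The subalgebra `S(R₋)` of `S(R)`, where
`R₋ = ℂ[∂] ⊗ (J_{g_≤} ⊕ φ^{n₋} ⊕ Φ_{g(1/2)})`. -/
def Aminus (R : BRST D Bs P k) : Subalgebra ℂ A :=
  Algebra.adjoin ℂ
    ({y : A | ∃ (n : ℕ) (i : ℚ) (a : g), i ≤ 0 ∧ a ∈ D.gwt i ∧ y = (P.δ ^ n) (R.Jel a)}
      ∪ {y : A | ∃ (n : ℕ) (j : ℚ) (b : g), j < 0 ∧ b ∈ D.gwt j ∧ y = (P.δ ^ n) (R.φd b)}
      ∪ {y : A | ∃ (n : ℕ) (c : g), c ∈ D.gwt (1 / 2 : ℚ) ∧ y = (P.δ ^ n) (R.Φn c)})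

/-- The subalgebra `S(R₊)` of `S(R)`, where `R₊ = ℂ[∂] ⊗ (φ_n ⊕ d_{(0)}(φ_n))`. -/
def Aplus (R : BRST D Bs P k) : Subalgebra ℂ A :=
  Algebra.adjoin ℂ
    ({y : A | ∃ (n : ℕ) (i : ℚ) (a : g), 0 < i ∧ a ∈ D.gwt i ∧ y = (P.δ ^ n) (R.φc a)}
      ∪ {y : A | ∃ (n : ℕ) (i : ℚ) (a : g), 0 < i ∧ a ∈ D.gwt i ∧
          y = (P.δ ^ n) (R.d0 (R.φc a))})

end BRST

/-!
The element `d` is the BRST charge of a moment map. The linear map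
`W(a) = (-1)^{p(a)} a + Φ_a + (a|f)` satisfies `{W(a)_λ W(b)} = W([a, b])` for `a, b ∈ n`: the
central term of the currents vanishes on `n` for weight reasons, and `{Φ_a λ Φ_b} = (f|[a, b])`
accounts for the constant term of `W([a, b])`. Expanding `φ^f` in the dual basis gives `d = Q + q`
with `Q = ∑_α φ^α W(u_α)` and `q` the cubic ghost term. For a moment map, `{Q_λ Q}` is minus the
Chevalley–Eilenberg differential of `∑_α φ^α W(u_α)`, which `{Q_λ q} + {q_λ Q}` cancels, while
`{q_λ q}` is a multiple of the sum of `± φ^α φ^β φ^γ φ_{[u_γ, [u_β, u_α]]}`, which vanishes: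
reordering the ghosts and the Jacobi identity turn it into minus twice itself.
-/

/-- The sign `(-1)^p` of a parity `p`; the Koszul sign of parities `p` and `q` is
`paritySign (p * q)`. -/
def paritySign (p : ZMod 2) : ℂ := (-1) ^ p.val

@[simp]
lemma paritySign_zero : paritySign 0 = 1 := by simp [paritySign]

@[simp]
lemma paritySign_one : paritySign 1 = -1 := by
  simp [paritySign, ZMod.val_one]

lemma parity_cases : ∀ p : ZMod 2, p = 0 ∨ p = 1 := by decide

lemma paritySign_add (p q : ZMod 2) : paritySign (p + q) = paritySign p * paritySign q := by
  rcases parity_cases p with rfl | rfl <;> rcases parity_cases q with rfl | rfl <;>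
    simp [CharTwo.add_self_eq_zero]

@[simp]
lemma paritySign_mul_self (p : ZMod 2) : paritySign p * paritySign p = 1 := by
  rw [← paritySign_add, CharTwo.add_self_eq_zero, paritySign_zero]

lemma paritySign_injective : Function.Injective paritySign := by
  intro p q h
  rcases parity_cases p with rfl | rfl <;> rcases parity_cases q with rfl | rfl <;>
    first | rfl | norm_num at h

/-- `a` is homogeneous of parity `p`, the parity being encoded by an involution `σ` that fixes
the even elements and negates the odd ones. -/
def HasParity {M : Type*} [AddCommGroup M] [Module ℂ M] (σ : M → M) (p : ZMod 2) (a : M) : Prop :=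
  σ a = paritySign p • a

section HasParity

variable {M N : Type*} [AddCommGroup M] [Module ℂ M] [AddCommGroup N] [Module ℂ N]
  {σ : M → M} {τ : N → N} {p q : ZMod 2} {a : M} {b : N}

lemma hasParity_zero_iff : HasParity σ 0 a ↔ σ a = a := by simp [HasParity]

lemma hasParity_one_iff : HasParity σ 1 a ↔ σ a = -a := by simp [HasParity]

lemma HasParity.koszul_cases (ha : HasParity σ p a) (hb : HasParity τ q b) :
    ((σ a = a ∨ τ b = b) ∧ paritySign (p * q) = 1) ∨
      (σ a = -a ∧ τ b = -b ∧ paritySign (p * q) = -1) := by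
  rcases parity_cases p with rfl | rfl
  · exact Or.inl ⟨Or.inl (hasParity_zero_iff.1 ha), by simp⟩
  rcases parity_cases q with rfl | rfl
  · exact Or.inl ⟨Or.inr (hasParity_zero_iff.1 hb), by simp⟩
  · exact Or.inr ⟨hasParity_one_iff.1 ha, hasParity_one_iff.1 hb, by simp⟩

end HasParity

namespace SuperSetup

variable {g : Type} [AddCommGroup g] [Module ℂ g] (D : SuperSetup g)
  {i j : ℚ} {p q : ZMod 2} {a b : g}

lemma mem_gwt_iff : a ∈ D.gwt i ↔ D.lie D.x a = (i : ℂ) • a := by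
  simp [gwt, sub_eq_zero]

lemma e_mem_gwt : D.e ∈ D.gwt 1 := by simp [mem_gwt_iff, D.lie_xe]

lemma f_mem_gwt : D.f ∈ D.gwt (-1) := by simp [mem_gwt_iff, D.lie_xf]

lemma lie_mem_gwt (ha : a ∈ D.gwt i) (hb : b ∈ D.gwt j) : D.lie a b ∈ D.gwt (i + j) := by
  rw [mem_gwt_iff] at *
  rw [D.jacobi _ _ _ (Or.inl D.x_even), ha, hb]
  simp [add_smul]

lemma form_eq_zero_of_gwt (ha : a ∈ D.gwt i) (hb : b ∈ D.gwt j) (hij : i + j ≠ 0) :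
    D.form a b = 0 := by
  rw [mem_gwt_iff] at ha hb
  have invariance : -((i : ℂ) * D.form a b) = j * D.form a b := by
    have h := D.form_invariant a D.x b
    rwa [D.lie_skew a D.x (Or.inr D.x_even), ha, hb, map_neg, LinearMap.neg_apply, map_smul,
      map_smul, LinearMap.smul_apply, smul_eq_mul, smul_eq_mul] at h
  have weight_mul : ((i + j : ℚ) : ℂ) * D.form a b = 0 := by
    push_cast
    linear_combination -invariance
  exact (mul_eq_zero.1 weight_mul).resolve_left (by exact_mod_cast hij)

lemma lie_swap (ha : HasParity D.σg p a) (hb : HasParity D.σg q b) :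
    D.lie a b = paritySign (p * q + 1) • D.lie b a := by
  rw [paritySign_add]
  rcases ha.koszul_cases hb with ⟨h, hpq⟩ | ⟨h, h', hpq⟩
  · simp [hpq, D.lie_skew a b h]
  · simp [hpq, D.lie_skew_odd a b h h']

lemma lie_lie (ha : HasParity D.σg p a) (hb : HasParity D.σg q b) (c : g) :
    D.lie a (D.lie b c) =
      D.lie (D.lie a b) c + paritySign (p * q) • D.lie b (D.lie a c) := by
  rcases ha.koszul_cases hb with ⟨h, hpq⟩ | ⟨h, h', hpq⟩
  · simp [hpq, D.jacobi a b c h]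
  · simp [hpq, D.jacobi_odd a b c h h', sub_eq_add_neg]

lemma hasParity_lie (ha : HasParity D.σg p a) (hb : HasParity D.σg q b) :
    HasParity D.σg (p + q) (D.lie a b) := by
  rw [HasParity] at *
  rw [D.σg_lie, ha, hb, paritySign_add]
  simp only [map_smul, LinearMap.smul_apply, smul_smul, mul_comm]

lemma form_eq_zero_of_parity_ne (ha : HasParity D.σg p a) (hb : HasParity D.σg q b)
    (hpq : p ≠ q) : D.form a b = 0 := by
  have evenness : paritySign p * paritySign q * D.form a b = D.form a b := by
    have h := D.form_super a b
    rw [HasParity] at ha hb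
    rwa [ha, hb, map_smul, map_smul, LinearMap.smul_apply, smul_smul, smul_eq_mul,
      mul_comm (paritySign q)] at h
  have signs_ne : paritySign p * paritySign q ≠ 1 := fun h => hpq <| paritySign_injective <| by
    linear_combination paritySign q * h - paritySign p * paritySign_mul_self q
  by_contra h
  exact signs_ne (mul_right_cancel₀ h (evenness.trans (one_mul _).symm))

lemma form_f_lie (a b : g) : D.form D.f (D.lie a b) = D.form (D.lie a b) D.f := by
  rw [← D.form_invariant, D.lie_skew D.f a (Or.inl D.f_even), map_neg, LinearMap.neg_apply,
    D.form_invariant, D.lie_skew D.f b (Or.inl D.f_even), map_neg, neg_neg, D.form_invariant]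

attribute [local instance] LieRing.ofAssociativeRing

lemma isSl2Triple :
    IsSl2Triple (L := Module.End ℂ g) ((2 : ℂ) • D.lie D.x) (D.lie D.e) (D.lie D.f) where
  h_ne_zero h := by
    have lie_xe : D.lie D.x D.e = 0 := by
      simpa using LinearMap.congr_fun h D.e
    have form_ef := D.form_ef
    rw [← D.lie_xe, lie_xe] at form_ef
    simp at form_ef
  lie_e_f := by
    ext c
    simp [Ring.lie_def, D.jacobi D.e D.f c (Or.inl D.e_even), D.lie_ef]
  lie_h_e_nsmul := by
    ext c
    simp only [two_smul, Ring.lie_def, LinearMap.sub_apply, Module.End.mul_apply,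
      LinearMap.add_apply, D.jacobi D.x D.e c (Or.inl D.x_even), D.lie_xe, map_add]
    abel
  lie_h_f_nsmul := by
    ext c
    simp only [two_smul, Ring.lie_def, LinearMap.sub_apply, Module.End.mul_apply,
      LinearMap.add_apply, D.jacobi D.x D.f c (Or.inl D.x_even), D.lie_xf, map_neg,
      LinearMap.neg_apply, map_add, neg_add_rev]
    abel

lemma lie_e_pow_mem_gwt (ha : a ∈ D.gwt i) (n : ℕ) :
    (D.lie D.e ^ n : Module.End ℂ g) a ∈ D.gwt (i + n) := by
  induction n with
  | zero => simpa using ha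
  | succ n ih =>
    rw [pow_succ', Module.End.mul_apply]
    convert D.lie_mem_gwt D.e_mem_gwt ih using 1
    push_cast
    ring_nf

end SuperSetup

namespace BasisData

variable {g : Type} [AddCommGroup g] [Module ℂ g] {D : SuperSetup g}
  {I : Type} [Fintype I] [DecidableEq I] (Bs : BasisData D I)
  {i j : ℚ} {a b : g}

/-- The parity `p(α)` as an element of `ZMod 2`, so that signs are computed by arithmetic
modulo two. -/
def parity (α : I) : ZMod 2 := if Bs.par α then 1 else 0

lemma sgn_eq_paritySign (α : I) : Bs.sgn α = paritySign (Bs.parity α) := by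
  cases h : Bs.par α <;> simp [sgn, parity, h]

lemma hasParity_u (α : I) : HasParity D.σg (Bs.parity α) (Bs.u α) := by
  rw [HasParity, ← sgn_eq_paritySign]
  exact Bs.hσu α

lemma hasParity_udual (α : I) : HasParity D.σg (Bs.parity α) (Bs.udual α) := by
  rw [HasParity, ← sgn_eq_paritySign]
  exact Bs.hσud α

lemma hasParity_lie_u (α β : I) :
    HasParity D.σg (Bs.parity α + Bs.parity β) (D.lie (Bs.u α) (Bs.u β)) :=
  D.hasParity_lie (Bs.hasParity_u α) (Bs.hasParity_u β)

lemma mem_S {α : I} : α ∈ Bs.S ↔ 0 < Bs.jdeg α := by simp [S]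

lemma mem_Shalf {α : I} : α ∈ Bs.Shalf ↔ Bs.jdeg α = 1 / 2 := by simp [Shalf]

lemma form_udual_eq_zero (ha : a ∈ D.gwt i) {γ : I} (hγ : Bs.jdeg γ ≠ i) :
    D.form a (Bs.udual γ) = 0 :=
  D.form_eq_zero_of_gwt ha (Bs.hud γ) fun h => hγ (by linarith)

lemma sum_S_form_smul_u (ha : a ∈ D.gwt i) (hi : 0 < i) :
    ∑ γ ∈ Bs.S, D.form a (Bs.udual γ) • Bs.u γ = a := by
  refine (Finset.sum_subset (Finset.subset_univ _) fun γ _ hγ => ?_).trans (Bs.compl a)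
  rw [Bs.form_udual_eq_zero ha fun h => hγ (Bs.mem_S.2 (h ▸ hi)), zero_smul]

lemma eq_of_eqOn_u {M : Type*} [AddCommGroup M] [Module ℂ M] {F G : g →ₗ[ℂ] M}
    (h : ∀ γ ∈ Bs.S, F (Bs.u γ) = G (Bs.u γ)) (ha : a ∈ D.gwt i) (hi : 0 < i) : F a = G a := by
  rw [← Bs.sum_S_form_smul_u ha hi, map_sum, map_sum]
  exact Finset.sum_congr rfl fun γ hγ => by rw [map_smul, map_smul, h γ hγ]

lemma lie_u_mem_gwt (α β : I) : D.lie (Bs.u α) (Bs.u β) ∈ D.gwt (Bs.jdeg α + Bs.jdeg β) :=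
  D.lie_mem_gwt (Bs.hu α) (Bs.hu β)

lemma jdeg_add_pos {α β : I} (hα : α ∈ Bs.S) (hβ : β ∈ Bs.S) : 0 < Bs.jdeg α + Bs.jdeg β :=
  add_pos (Bs.mem_S.1 hα) (Bs.mem_S.1 hβ)

include Bs in
lemma finiteDimensional : FiniteDimensional ℂ g :=
  .of_basis (.mk Bs.basisu Bs.spanu.ge)

lemma linearIndependent_udual : LinearIndependent ℂ Bs.udual := by
  rw [Fintype.linearIndependent_iff]
  intro c hc α
  simpa [Bs.hdual] using congrArg (D.form (Bs.u α)) hc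

lemma sum_form_smul_udual (b : g) : ∑ α, D.form (Bs.u α) b • Bs.udual α = b := by
  have := Bs.finiteDimensional
  have card_eq : Fintype.card I = Module.finrank ℂ g :=
    (Module.finrank_eq_card_basis (.mk Bs.basisu Bs.spanu.ge)).symm
  have expansion : ∑ α, (D.form (Bs.u α)).smulRight (Bs.udual α) = LinearMap.id :=
    LinearMap.ext_on_range (Bs.linearIndependent_udual.span_eq_top_of_card_eq_finrank' card_eq)
      fun β => by simp [Bs.hdual]
  simpa using LinearMap.congr_fun expansion b

lemma exists_jdeg_eq (ha : a ∈ D.gwt i) (ha₀ : a ≠ 0) : ∃ γ, Bs.jdeg γ = i := by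
  by_contra! h
  refine ha₀ ((Bs.compl a).symm.trans (Finset.sum_eq_zero fun γ _ => ?_))
  rw [Bs.form_udual_eq_zero ha (h γ), zero_smul]

attribute [local instance] LieRing.ofAssociativeRing

include Bs in
lemma exists_lie_e_pow_eq_zero (ha : a ∈ D.gwt i) :
    ∃ n : ℕ, (D.lie D.e ^ n : Module.End ℂ g) a = 0 := by
  by_contra! h
  choose γ hγ using fun n => Bs.exists_jdeg_eq (D.lie_e_pow_mem_gwt ha n) (h n)
  refine not_injective_infinite_finite γ fun m n hmn => ?_
  have weights_eq : i + m = i + n := by rw [← hγ m, ← hγ n, hmn]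
  exact_mod_cast add_left_cancel weights_eq

include Bs in
lemma exists_two_mul_weight_eq_intCast (ha : a ∈ D.gwt i) (ha₀ : a ≠ 0) :
    ∃ n : ℤ, 2 * i = n := by
  have := Bs.finiteDimensional
  obtain ⟨n, hn, hn'⟩ := Nat.exists_not_and_succ_of_not_zero_of_exists
    (p := fun n => (D.lie D.e ^ n : Module.End ℂ g) a = 0) ha₀ (Bs.exists_lie_e_pow_eq_zero ha)
  have primitive : D.isSl2Triple.HasPrimitiveVectorWith
      ((D.lie D.e ^ n : Module.End ℂ g) a) (2 * ((i : ℂ) + n)) := by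
    refine ⟨hn, ?_, ?_⟩
    · simp [D.mem_gwt_iff.1 (D.lie_e_pow_mem_gwt ha n), mul_smul]
    · simpa [pow_succ'] using hn'
  obtain ⟨m, hm⟩ := primitive.exists_nat
  have two_mul_add : (2 * (i + n) : ℚ) = m := by exact_mod_cast hm
  refine ⟨m - 2 * n, ?_⟩
  push_cast
  linarith

include Bs in
lemma half_le_of_mem_gwt (ha : a ∈ D.gwt i) (ha₀ : a ≠ 0) (hi : 0 < i) : 1 / 2 ≤ i := by
  obtain ⟨n, hn⟩ := Bs.exists_two_mul_weight_eq_intCast ha ha₀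
  have : (0 : ℚ) < n := by linarith
  have : (1 : ℚ) ≤ n := by exact_mod_cast this
  linarith

include Bs in
lemma form_f_lie_eq_zero (ha : a ∈ D.gwt i) (hb : b ∈ D.gwt j) (hi : 0 < i) (hj : 0 < j)
    (hij : ¬(i = 1 / 2 ∧ j = 1 / 2)) : D.form D.f (D.lie a b) = 0 := by
  by_contra h
  have hi' := Bs.half_le_of_mem_gwt ha (by rintro rfl; simp at h) hi
  have hj' := Bs.half_le_of_mem_gwt hb (by rintro rfl; simp at h) hj
  refine h (D.form_eq_zero_of_gwt D.f_mem_gwt (D.lie_mem_gwt ha hb) fun h0 => hij ?_)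
  constructor <;> linarith

lemma half_le_jdeg {α : I} (hα : α ∈ Bs.S) : 1 / 2 ≤ Bs.jdeg α :=
  Bs.half_le_of_mem_gwt (Bs.hu α) (Bs.basisu.ne_zero α) (Bs.mem_S.1 hα)

end BasisData

namespace PVA

variable {A : Type} [Ring A] [Algebra ℂ A] {P : PVA A} {p q : ZMod 2} {a b c z w : A}

lemma hasParity_mul (ha : HasParity P.σ p a) (hb : HasParity P.σ q b) :
    HasParity P.σ (p + q) (a * b) := by
  rw [HasParity] at *
  rw [map_mul, ha, hb, smul_mul_smul_comm, paritySign_add]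

lemma hasParity_add (ha : HasParity P.σ p a) (hb : HasParity P.σ p b) :
    HasParity P.σ p (a + b) := by
  rw [HasParity] at *
  rw [map_add, ha, hb, smul_add]

lemma hasParity_smul (t : ℂ) (ha : HasParity P.σ p a) : HasParity P.σ p (t • a) := by
  rw [HasParity] at *
  rw [map_smul, ha, smul_comm]

lemma hasParity_sum {J : Type*} {T : Finset J} {x : J → A}
    (h : ∀ j ∈ T, HasParity P.σ p (x j)) : HasParity P.σ p (∑ j ∈ T, x j) := by
  rw [HasParity, map_sum, Finset.smul_sum]
  exact Finset.sum_congr rfl h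

lemma mul_swap (ha : HasParity P.σ p a) (hb : HasParity P.σ q b) :
    a * b = paritySign (p * q) • (b * a) := by
  rcases ha.koszul_cases hb with ⟨h, hpq⟩ | ⟨h, h', hpq⟩
  · rw [hpq, one_smul, P.supercomm a b h]
  · rw [hpq, neg_one_smul, P.supercomm_odd a b h h']

variable (P) in
/-- The `λ`-bracket `{a_λ b}` is the constant polynomial `z`. -/
def HasBr (a b z : A) : Prop := P.Br a b = C z

lemma oppSubst_C (z : A) : oppSubst P.δ (C z) = C z := by
  rw [oppSubst, sum_C_index] <;> simp

lemma hasBr_zero_iff : P.HasBr a b 0 ↔ P.Br a b = 0 := by rw [HasBr, C_0]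

lemma HasBr.hasParity (ha : HasParity P.σ p a) (hb : HasParity P.σ q b) (h : P.HasBr a b z) :
    HasParity P.σ (p + q) z := by
  have h_coeff := P.br_parity a b 0
  rw [HasBr] at h
  rw [HasParity] at *
  rw [ha, hb, map_smul, map_smul, LinearMap.smul_apply, h, coeff_C_zero, coeff_smul, coeff_smul,
    coeff_C_zero, smul_smul, mul_comm, ← paritySign_add] at h_coeff
  exact h_coeff

lemma HasBr.add (h : P.HasBr a b z) (h' : P.HasBr a c w) : P.HasBr a (b + c) (z + w) := by
  rw [HasBr] at *
  rw [map_add, h, h', C_add]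

lemma HasBr.add_left (h : P.HasBr a c z) (h' : P.HasBr b c w) :
    P.HasBr (a + b) c (z + w) := by
  rw [HasBr] at *
  rw [map_add, LinearMap.add_apply, h, h', C_add]

lemma HasBr.smul (t : ℂ) (h : P.HasBr a b z) : P.HasBr a (t • b) (t • z) := by
  rw [HasBr] at *
  rw [map_smul, h, smul_C]

lemma HasBr.smul_left (t : ℂ) (h : P.HasBr a b z) : P.HasBr (t • a) b (t • z) := by
  rw [HasBr] at *
  rw [map_smul, LinearMap.smul_apply, h, smul_C]

lemma HasBr.sum {J : Type*} {T : Finset J} {x y : J → A}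
    (h : ∀ j ∈ T, P.HasBr a (x j) (y j)) : P.HasBr a (∑ j ∈ T, x j) (∑ j ∈ T, y j) := by
  rw [HasBr, map_sum, map_sum]
  exact Finset.sum_congr rfl h

lemma HasBr.mul (ha : HasParity P.σ p a) (hb : HasParity P.σ q b) (h : P.HasBr a b z)
    (h' : P.HasBr a c w) : P.HasBr a (b * c) (z * c + paritySign (p * q) • (b * w)) := by
  rw [HasBr] at *
  rcases ha.koszul_cases hb with ⟨hab, hpq⟩ | ⟨hσa, hσb, hpq⟩
  · rw [P.leibniz a b c hab, h, h', hpq, one_smul, C_add, C_mul, C_mul, add_comm]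
  · rw [P.leibniz_odd a b c hσa hσb, h, h', hpq, neg_one_smul, C_add, C_neg, C_mul, C_mul, add_comm]

lemma HasBr.swap (ha : HasParity P.σ p a) (hb : HasParity P.σ q b) (h : P.HasBr a b z) :
    P.HasBr b a (paritySign (p * q + 1) • z) := by
  rw [HasBr] at *
  rw [paritySign_add, paritySign_one, mul_neg_one, ← smul_C]
  rcases hb.koszul_cases ha with ⟨hba, hqp⟩ | ⟨hσb, hσa, hqp⟩
  · rw [P.skew b a hba, h, oppSubst_C, mul_comm, hqp, neg_one_smul]
  · rw [P.skew_odd b a hσb hσa, h, oppSubst_C, mul_comm, hqp, neg_neg, one_smul]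

lemma HasBr.swap_zero (ha : HasParity P.σ p a) (hb : HasParity P.σ q b) (h : P.HasBr a b 0) :
    P.HasBr b a 0 := by
  simpa using h.swap ha hb

lemma hasBr_one (a : A) : P.HasBr a 1 0 := by
  have h := P.leibniz a 1 1 (Or.inr (map_one _))
  rw [mul_one, C_1, one_mul, mul_one, left_eq_add] at h
  exact hasBr_zero_iff.2 h

lemma one_hasBr (a : A) : P.HasBr 1 a 0 := by
  rw [hasBr_zero_iff, P.skew 1 a (Or.inl (map_one _)), hasBr_zero_iff.1 (P.hasBr_one a)]
  simp [oppSubst]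

lemma hasBr_algebraMap (a : A) (t : ℂ) : P.HasBr a (algebraMap ℂ A t) 0 := by
  simpa [Algebra.algebraMap_eq_smul_one] using (P.hasBr_one a).smul t

lemma algebraMap_hasBr (t : ℂ) (a : A) : P.HasBr (algebraMap ℂ A t) a 0 := by
  simpa [Algebra.algebraMap_eq_smul_one] using (P.one_hasBr a).smul_left t

end PVA

namespace BRST

open PVA

variable {g : Type} [AddCommGroup g] [Module ℂ g] {D : SuperSetup g}
  {I : Type} [Fintype I] [DecidableEq I] {Bs : BasisData D I}
  {A : Type} [Ring A] [Algebra ℂ A] {P : PVA A} {k : ℂ} (R : BRST D Bs P k)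

/-- The ghost `φ^α`, of parity `p(α) + 1`. -/
def ghost (α : I) : A := R.φd (Bs.udual α)

lemma hasParity_ghost (α : I) : HasParity P.σ (Bs.parity α + 1) (R.ghost α) := by
  rw [HasParity, ghost, R.σφd, Bs.hasParity_udual α, map_smul, paritySign_add, paritySign_one,
    mul_neg_one, neg_smul]

lemma hasParity_φc {p : ZMod 2} {a : g} (ha : HasParity D.σg p a) :
    HasParity P.σ (p + 1) (R.φc a) := by
  rw [HasParity, R.σφc, ha, map_smul, paritySign_add, paritySign_one, mul_neg_one, neg_smul]

lemma hasBr_ghost_ghost (α β : I) : P.HasBr (R.ghost α) (R.ghost β) 0 :=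
  hasBr_zero_iff.2 (R.br_φdφd _ _)

lemma hasBr_φc_φc (a b : g) : P.HasBr (R.φc a) (R.φc b) 0 :=
  hasBr_zero_iff.2 (R.br_φφ _ _)

lemma hasBr_φc_ghost {γ α : I} (hγ : γ ∈ Bs.S) (hα : α ∈ Bs.S) :
    P.HasBr (R.φc (Bs.u γ)) (R.ghost α) (if γ = α then 1 else 0) := by
  rw [HasBr, ghost, R.br_φφd _ _ (Bs.mem_S.1 hγ) (neg_lt_zero.2 (Bs.mem_S.1 hα)) _ (Bs.hu γ) _
    (Bs.hud α), Bs.hdual]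
  split_ifs <;> simp

/-- The coordinate `a ↦ (a|u^γ)` along `u_γ`, with values in the scalars of `A`. -/
def coord (Bs : BasisData D I) (A : Type) [Ring A] [Algebra ℂ A] (γ : I) : g →ₗ[ℂ] A :=
  Algebra.linearMap ℂ A ∘ₗ D.form.flip (Bs.udual γ)

lemma hasBr_ghost_φc {γ : I} (hγ : γ ∈ Bs.S) {i : ℚ} {a : g} (ha : a ∈ D.gwt i) (hi : 0 < i) :
    P.HasBr (R.ghost γ) (R.φc a) (paritySign (Bs.parity γ) • coord Bs A γ a) := by
  have linear_extension := Bs.eq_of_eqOn_u (F := P.Br (R.ghost γ) ∘ₗ R.φc)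
    (G := paritySign (Bs.parity γ) • CAlgHom.toLinearMap ∘ₗ coord Bs A γ) (fun α hα => ?_) ha hi
  · simpa [HasBr, smul_C] using linear_extension
  have h := (R.hasBr_φc_ghost hα hγ).swap (R.hasParity_φc (Bs.hasParity_u α))
    (R.hasParity_ghost γ)
  rw [HasBr] at h
  rw [LinearMap.comp_apply, h]
  have sign_identity : ∀ p : ZMod 2, (p + 1) * (p + 1) + 1 = p := by decide
  rcases eq_or_ne α γ with rfl | hαγ
  · simp [coord, Bs.hdual, sign_identity, ← smul_C]
  · simp [coord, Bs.hdual, hαγ]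

/-- The sum `∑_{α ∈ S} φ^α F(u_α)` pairing the ghosts with a linear map `F`. -/
def coupling (F : g →ₗ[ℂ] A) : A := ∑ α ∈ Bs.S, R.ghost α * F (Bs.u α)

/-- The sum `∑_{α,β ∈ S} (-1)^{p(α)} φ^α φ^β F([u_β, u_α])`, which is up to normalisation the
Chevalley–Eilenberg differential of the cochain `∑_{α ∈ S} φ^α F(u_α)`. -/
def ceDiff (F : g →ₗ[ℂ] A) : A :=
  ∑ α ∈ Bs.S, ∑ β ∈ Bs.S, paritySign (Bs.parity α) •
    (R.ghost α * (R.ghost β * F (D.lie (Bs.u β) (Bs.u α))))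

/-- The ghost current, whose value at `a` is `∑_{β ∈ S} (-1)^{p(a)} φ^β φ_{[u_β, a]}`. -/
def ghostCurrent : g →ₗ[ℂ] A :=
  ∑ β ∈ Bs.S, LinearMap.mulLeft ℂ (R.ghost β) ∘ₗ R.φc ∘ₗ D.lie (Bs.u β) ∘ₗ D.σg

lemma ghostCurrent_apply {p : ZMod 2} {a : g} (ha : HasParity D.σg p a) :
    R.ghostCurrent a =
      paritySign p • ∑ β ∈ Bs.S, R.ghost β * R.φc (D.lie (Bs.u β) a) := by
  rw [HasParity] at ha
  simp [ghostCurrent, ha, Finset.smul_sum]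

section ParityPreserving

variable {F : g →ₗ[ℂ] A} (hF : ∀ a, P.σ (F a) = F (D.σg a))

include hF

lemma hasParity_map {p : ZMod 2} {a : g} (ha : HasParity D.σg p a) : HasParity P.σ p (F a) := by
  rw [HasParity] at *
  rw [hF, ha, map_smul]

lemma hasParity_coupling : HasParity P.σ 1 (R.coupling F) :=
  hasParity_sum fun α _ => by
    have h := hasParity_mul (R.hasParity_ghost α) (hasParity_map hF (Bs.hasParity_u α))
    have parity_identity : ∀ p : ZMod 2, p + 1 + p = 1 := by decide
    rwa [parity_identity] at h

end ParityPreserving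

lemma hasParity_ceDiff_φc : HasParity P.σ 1 (R.ceDiff R.φc) :=
  hasParity_sum fun α _ => hasParity_sum fun β _ => hasParity_smul _ <| by
    have h := hasParity_mul (R.hasParity_ghost α) (hasParity_mul (R.hasParity_ghost β)
      (R.hasParity_φc (Bs.hasParity_lie_u β α)))
    have parity_identity : ∀ p q : ZMod 2, p + 1 + (q + 1 + (q + p + 1)) = 1 := by decide
    rwa [parity_identity] at h

lemma hasBr_coupling {p : ZMod 2} {c : A} {F : g →ₗ[ℂ] A} {x w : I → A}
    (hc : HasParity P.σ p c) (hx : ∀ α ∈ Bs.S, P.HasBr c (R.ghost α) (x α))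
    (hw : ∀ α ∈ Bs.S, P.HasBr c (F (Bs.u α)) (w α)) :
    P.HasBr c (R.coupling F) (∑ α ∈ Bs.S,
      (x α * F (Bs.u α) + paritySign (p * (Bs.parity α + 1)) • (R.ghost α * w α))) :=
  .sum fun α hα => .mul hc (R.hasParity_ghost α) (hx α hα) (hw α hα)

lemma hasBr_ceDiff {p : ZMod 2} {c : A} {F : g →ₗ[ℂ] A} {x : I → A} {w : I → I → A}
    (hc : HasParity P.σ p c) (hx : ∀ α ∈ Bs.S, P.HasBr c (R.ghost α) (x α))
    (hw : ∀ α ∈ Bs.S, ∀ β ∈ Bs.S, P.HasBr c (F (D.lie (Bs.u β) (Bs.u α))) (w α β)) :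
    P.HasBr c (R.ceDiff F) (∑ α ∈ Bs.S, ∑ β ∈ Bs.S, paritySign (Bs.parity α) •
      (x α * (R.ghost β * F (D.lie (Bs.u β) (Bs.u α))) + paritySign (p * (Bs.parity α + 1)) •
        (R.ghost α * (x β * F (D.lie (Bs.u β) (Bs.u α)) +
          paritySign (p * (Bs.parity β + 1)) • (R.ghost β * w α β))))) :=
  .sum fun α hα => .sum fun β hβ => .smul _ <|
    .mul hc (R.hasParity_ghost α) (hx α hα) <|
      .mul hc (R.hasParity_ghost β) (hx β hβ) (hw α hα β hβ)

lemma map_lie_u_swap (F : g →ₗ[ℂ] A) (α β : I) :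
    F (D.lie (Bs.u α) (Bs.u β)) =
      paritySign (Bs.parity α * Bs.parity β + 1) • F (D.lie (Bs.u β) (Bs.u α)) := by
  rw [D.lie_swap (Bs.hasParity_u α) (Bs.hasParity_u β), map_smul]

lemma hasBr_φc_ceDiff_φc {γ : I} (hγ : γ ∈ Bs.S) :
    P.HasBr (R.φc (Bs.u γ)) (R.ceDiff R.φc) ((2 : ℂ) • R.ghostCurrent (Bs.u γ)) := by
  convert R.hasBr_ceDiff (R.hasParity_φc (Bs.hasParity_u γ))
    (fun α hα => R.hasBr_φc_ghost hγ hα) (fun α _ β _ => R.hasBr_φc_φc _ _) using 1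
  simp only [mul_zero, smul_zero, add_zero, ite_mul, one_mul, zero_mul, mul_ite, smul_add,
    Finset.sum_add_distrib, smul_ite, Finset.sum_ite_eq, hγ, if_true, smul_smul]
  rw [Finset.sum_comm]
  simp only [Finset.sum_ite_eq, hγ, if_true]
  rw [R.ghostCurrent_apply (Bs.hasParity_u γ), two_smul, Finset.smul_sum]
  congr 1
  refine Finset.sum_congr rfl fun α _ => ?_
  rw [map_lie_u_swap R.φc γ α, mul_smul_comm, smul_smul, ← paritySign_add, ← paritySign_add]
  have sign_identity : ∀ p q : ZMod 2, p + (q + 1) * (p + 1) + (q * p + 1) = q := by decide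
  rw [sign_identity]

lemma hasBr_ceDiff_φc_φc {γ : I} (hγ : γ ∈ Bs.S) :
    P.HasBr (R.ceDiff R.φc) (R.φc (Bs.u γ))
      (paritySign (Bs.parity γ) • (2 : ℂ) • R.ghostCurrent (Bs.u γ)) := by
  have h := (R.hasBr_φc_ceDiff_φc hγ).swap (R.hasParity_φc (Bs.hasParity_u γ))
    R.hasParity_ceDiff_φc
  have sign_identity : ∀ p : ZMod 2, (p + 1) * 1 + 1 = p := by decide
  rwa [sign_identity] at h

lemma hasBr_ghost_ceDiff_φc {γ : I} (hγ : γ ∈ Bs.S) :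
    P.HasBr (R.ghost γ) (R.ceDiff R.φc)
      (paritySign (Bs.parity γ) • R.ceDiff (coord Bs A γ)) := by
  convert R.hasBr_ceDiff (R.hasParity_ghost γ) (fun α _ => R.hasBr_ghost_ghost γ α)
    (fun α hα β hβ => R.hasBr_ghost_φc hγ (Bs.lie_u_mem_gwt β α) (Bs.jdeg_add_pos hβ hα)) using 1
  simp only [ceDiff, Finset.smul_sum, zero_mul, zero_add, mul_smul_comm, smul_smul]
  refine Finset.sum_congr rfl fun α _ => Finset.sum_congr rfl fun β _ => ?_
  simp only [← paritySign_add]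
  by_cases hγαβ : Bs.parity β + Bs.parity α = Bs.parity γ
  · have sign_identity : ∀ p q : ZMod 2,
        q + p + p = p + ((q + p + 1) * (p + 1) + ((q + p + 1) * (q + 1) + (q + p))) := by decide
    rw [← hγαβ, sign_identity]
  · have coord_eq_zero : coord Bs A γ (D.lie (Bs.u β) (Bs.u α)) = 0 := by
      simp [coord, D.form_eq_zero_of_parity_ne (Bs.hasParity_lie_u β α) (Bs.hasParity_udual γ) hγαβ]
    simp only [coord_eq_zero, mul_zero, smul_zero]

lemma hasBr_ceDiff_φc_ghost {γ : I} (hγ : γ ∈ Bs.S) :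
    P.HasBr (R.ceDiff R.φc) (R.ghost γ) (R.ceDiff (coord Bs A γ)) := by
  have h := (R.hasBr_ghost_ceDiff_φc hγ).swap (R.hasParity_ghost γ) R.hasParity_ceDiff_φc
  have sign_identity : ∀ p : ZMod 2, (p + 1) * 1 + 1 + p = 0 := by decide
  rwa [smul_smul, ← paritySign_add, sign_identity, paritySign_zero, one_smul] at h

lemma hasBr_φc_of_basis {E : A} {H : g →ₗ[ℂ] A}
    (hE : ∀ γ ∈ Bs.S, P.HasBr E (R.φc (Bs.u γ)) (paritySign (Bs.parity γ) • H (Bs.u γ)))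
    {i : ℚ} {p : ZMod 2} {a : g} (ha : a ∈ D.gwt i) (hi : 0 < i) (hp : HasParity D.σg p a) :
    P.HasBr E (R.φc a) (paritySign p • H a) := by
  have linear_extension := Bs.eq_of_eqOn_u (F := P.Br E ∘ₗ R.φc)
    (G := CAlgHom.toLinearMap ∘ₗ H ∘ₗ D.σg) (fun γ hγ => ?_) ha hi
  · rw [HasParity] at hp
    simpa [HasBr, hp] using linear_extension
  · have hγ_parity := Bs.hasParity_u γ
    rw [HasParity] at hγ_parity
    have h := hE γ hγ
    rw [HasBr] at h
    simp [h, hγ_parity]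

lemma sum_smul_mul_ghost_mul_map_lie (F : g →ₗ[ℂ] A) {x : I → A}
    (hx : ∀ α ∈ Bs.S, HasParity P.σ (Bs.parity α) (x α)) :
    ∑ α ∈ Bs.S, ∑ β ∈ Bs.S, paritySign (Bs.parity α) •
        (x α * (R.ghost β * F (D.lie (Bs.u β) (Bs.u α)))) =
      -∑ α ∈ Bs.S, ∑ β ∈ Bs.S, R.ghost α * (x β * F (D.lie (Bs.u β) (Bs.u α))) := by
  rw [Finset.sum_comm]
  simp only [← Finset.sum_neg_distrib]
  refine Finset.sum_congr rfl fun α _ => Finset.sum_congr rfl fun β hβ => ?_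
  rw [← mul_assoc, mul_swap (hx β hβ) (R.hasParity_ghost α), map_lie_u_swap, mul_smul_comm,
    smul_mul_assoc, smul_smul, smul_smul, ← paritySign_add, ← paritySign_add, mul_assoc]
  have sign_identity : ∀ p q : ZMod 2, q + (p * q + 1) + q * (p + 1) = 1 := by decide
  rw [sign_identity, paritySign_one, neg_one_smul]

lemma hasBr_odd_ceDiff_φc {E : A} {H : g →ₗ[ℂ] A} {x : I → A} (hE : HasParity P.σ 1 E)
    (hx : ∀ γ ∈ Bs.S, P.HasBr E (R.ghost γ) (x γ))
    (hH : ∀ γ ∈ Bs.S, P.HasBr E (R.φc (Bs.u γ)) (paritySign (Bs.parity γ) • H (Bs.u γ))) :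
    P.HasBr E (R.ceDiff R.φc) (R.ceDiff H -
      (2 : ℂ) • ∑ α ∈ Bs.S, ∑ β ∈ Bs.S, R.ghost α * (x β * R.φc (D.lie (Bs.u β) (Bs.u α)))) := by
  convert R.hasBr_ceDiff hE hx (fun α hα β hβ => R.hasBr_φc_of_basis hH
    (Bs.lie_u_mem_gwt β α) (Bs.jdeg_add_pos hβ hα) (Bs.hasParity_lie_u β α)) using 1
  have hx_parity : ∀ γ ∈ Bs.S, HasParity P.σ (Bs.parity γ) (x γ) := fun γ hγ => by
    have parity_identity : ∀ p : ZMod 2, 1 + (p + 1) = p := by decide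
    simpa only [parity_identity] using (hx γ hγ).hasParity hE (R.hasParity_ghost γ)
  have second_factor (p : ZMod 2) : paritySign (p + (p + 1)) = -1 := by
    rw [show p + (p + 1) = 1 by revert p; decide, paritySign_one]
  have sign_identity : ∀ p q : ZMod 2, p + (p + 1 + (q + 1 + (q + p))) = p := by decide
  simp only [smul_add, mul_add, mul_smul_comm, smul_smul, one_mul, ← paritySign_add,
    sign_identity]
  simp only [second_factor, neg_one_smul, Finset.sum_add_distrib, Finset.sum_neg_distrib,
    R.sum_smul_mul_ghost_mul_map_lie R.φc hx_parity]
  rw [ceDiff]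
  module

/-- The sums `∑ ± φ^α φ^β φ^γ F([u_γ, [u_β, u_α]])`; they vanish by the Jacobi identity. -/
def cubic (F : g →ₗ[ℂ] A) : A :=
  ∑ α ∈ Bs.S, ∑ β ∈ Bs.S, ∑ γ ∈ Bs.S, paritySign (Bs.parity β) •
    (R.ghost α * (R.ghost β * (R.ghost γ * F (D.lie (Bs.u γ) (D.lie (Bs.u β) (Bs.u α))))))

lemma sum_ghost_mul_ceDiff_flip_lie (F : g →ₗ[ℂ] A) :
    ∑ α ∈ Bs.S, R.ghost α * R.ceDiff (F ∘ₗ D.lie.flip (Bs.u α)) = -R.cubic F := by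
  simp only [cubic, ceDiff, LinearMap.comp_apply, LinearMap.flip_apply, Finset.mul_sum,
    ← Finset.sum_neg_distrib]
  rw [Finset.sum_comm]
  refine Finset.sum_congr rfl fun α _ => ?_
  rw [Finset.sum_comm]
  refine Finset.sum_congr rfl fun β _ => Finset.sum_congr rfl fun γ _ => ?_
  have ghosts_rotate : R.ghost γ * (R.ghost α * R.ghost β) =
      paritySign ((Bs.parity γ + 1) * (Bs.parity α + 1 + (Bs.parity β + 1))) •
        (R.ghost α * R.ghost β * R.ghost γ) :=
    mul_swap (R.hasParity_ghost γ) (hasParity_mul (R.hasParity_ghost α) (R.hasParity_ghost β))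
  calc R.ghost γ * (paritySign (Bs.parity α) •
        (R.ghost α * (R.ghost β * F (D.lie (D.lie (Bs.u β) (Bs.u α)) (Bs.u γ)))))
      = paritySign (Bs.parity α) • (R.ghost γ * (R.ghost α * R.ghost β) *
          F (D.lie (D.lie (Bs.u β) (Bs.u α)) (Bs.u γ))) := by
        simp only [mul_smul_comm, mul_assoc]
    _ = paritySign (Bs.parity β + 1) • (R.ghost α * (R.ghost β *
          (R.ghost γ * F (D.lie (Bs.u γ) (D.lie (Bs.u β) (Bs.u α)))))) := by
        have sign_identity : ∀ p q r : ZMod 2,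
            p + ((r + 1) * (p + 1 + (q + 1)) + ((q + p) * r + 1)) = q + 1 := by decide
        rw [ghosts_rotate, D.lie_swap (Bs.hasParity_lie_u β α) (Bs.hasParity_u γ), map_smul,
          smul_mul_smul_comm, smul_smul, ← paritySign_add, ← paritySign_add, sign_identity]
        simp only [mul_assoc]
    _ = -(paritySign (Bs.parity β) • (R.ghost α * (R.ghost β *
          (R.ghost γ * F (D.lie (Bs.u γ) (D.lie (Bs.u β) (Bs.u α))))))) := by
        rw [paritySign_add, paritySign_one, mul_neg_one, neg_smul]

lemma cubic_eq_sum_ceDiff_sub_cubic (F : g →ₗ[ℂ] A) :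
    R.cubic F = ∑ α ∈ Bs.S, R.ghost α * R.ceDiff (F ∘ₗ D.lie.flip (Bs.u α)) - R.cubic F := by
  have exchanged : ∑ α ∈ Bs.S, ∑ β ∈ Bs.S, ∑ γ ∈ Bs.S,
      paritySign (Bs.parity β + Bs.parity γ * Bs.parity β) • (R.ghost α * (R.ghost β *
        (R.ghost γ * F (D.lie (Bs.u β) (D.lie (Bs.u γ) (Bs.u α)))))) = -R.cubic F := by
    simp only [cubic, ← Finset.sum_neg_distrib]
    refine Finset.sum_congr rfl fun α _ => ?_
    rw [Finset.sum_comm]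
    refine Finset.sum_congr rfl fun β _ => Finset.sum_congr rfl fun γ _ => ?_
    have sign_identity : ∀ p q : ZMod 2, q + p * q + (q + 1) * (p + 1) = p + 1 := by decide
    rw [← mul_assoc (R.ghost γ), mul_swap (R.hasParity_ghost γ) (R.hasParity_ghost β),
      smul_mul_assoc, mul_smul_comm, smul_smul, ← paritySign_add, sign_identity, mul_assoc,
      paritySign_add, paritySign_one, mul_neg_one, neg_smul]
  rw [sub_eq_add_neg, ← exchanged]
  simp only [cubic, ceDiff, LinearMap.comp_apply, LinearMap.flip_apply, Finset.mul_sum,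
    ← Finset.sum_add_distrib]
  refine Finset.sum_congr rfl fun α _ => Finset.sum_congr rfl fun β _ =>
    Finset.sum_congr rfl fun γ _ => ?_
  rw [D.lie_lie (Bs.hasParity_u γ) (Bs.hasParity_u β)]
  simp only [map_add, map_smul, mul_add, mul_smul_comm, smul_add, smul_smul, paritySign_add]

lemma cubic_eq_zero (F : g →ₗ[ℂ] A) : R.cubic F = 0 := by
  have h := R.cubic_eq_sum_ceDiff_sub_cubic F
  rw [R.sum_ghost_mul_ceDiff_flip_lie] at h
  have three_smul_cubic : (3 : ℂ) • R.cubic F = 0 := calc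
    (3 : ℂ) • R.cubic F = R.cubic F - (-R.cubic F - R.cubic F) := by module
    _ = 0 := by rw [← h, sub_self]
  exact (smul_eq_zero.1 three_smul_cubic).resolve_left (by norm_num)

lemma sum_ceDiff_coord_mul_φc (α : I) :
    ∑ β ∈ Bs.S, R.ceDiff (coord Bs A β) * R.φc (D.lie (Bs.u β) (Bs.u α)) =
      R.ceDiff (R.φc ∘ₗ D.lie.flip (Bs.u α)) := by
  simp only [ceDiff, Finset.sum_mul]
  rw [Finset.sum_comm]
  refine Finset.sum_congr rfl fun β hβ => ?_
  rw [Finset.sum_comm]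
  refine Finset.sum_congr rfl fun γ hγ => ?_
  have expansion : ∑ δ ∈ Bs.S, coord Bs A δ (D.lie (Bs.u γ) (Bs.u β)) *
      R.φc (D.lie (Bs.u δ) (Bs.u α)) = R.φc (D.lie (D.lie (Bs.u γ) (Bs.u β)) (Bs.u α)) := by
    conv_rhs => rw [← Bs.sum_S_form_smul_u (Bs.lie_u_mem_gwt γ β) (Bs.jdeg_add_pos hγ hβ)]
    simp [coord, Algebra.smul_def]
  rw [LinearMap.comp_apply, LinearMap.flip_apply, ← expansion]
  simp only [smul_mul_assoc, mul_assoc, Finset.mul_sum, Finset.smul_sum]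

lemma br_ceDiff_φc_ceDiff_φc : P.Br (R.ceDiff R.φc) (R.ceDiff R.φc) = 0 := by
  have h := R.hasBr_odd_ceDiff_φc (H := (2 : ℂ) • R.ghostCurrent) R.hasParity_ceDiff_φc
    (fun γ hγ => R.hasBr_ceDiff_φc_ghost hγ) (fun γ hγ => R.hasBr_ceDiff_φc_φc hγ)
  have ceDiff_ghostCurrent : R.ceDiff ((2 : ℂ) • R.ghostCurrent) = (2 : ℂ) • R.cubic R.φc := by
    simp only [ceDiff, cubic, Finset.smul_sum]
    refine Finset.sum_congr rfl fun α _ => Finset.sum_congr rfl fun β _ => ?_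
    rw [LinearMap.smul_apply, R.ghostCurrent_apply (Bs.hasParity_lie_u β α)]
    simp only [Finset.mul_sum, Finset.smul_sum, mul_smul_comm, smul_smul]
    refine Finset.sum_congr rfl fun γ _ => ?_
    congr 1
    rw [paritySign_add]
    linear_combination 2 * paritySign (Bs.parity β) * paritySign_mul_self (Bs.parity α)
  have ghost_action : ∑ α ∈ Bs.S, ∑ β ∈ Bs.S, R.ghost α *
      (R.ceDiff (coord Bs A β) * R.φc (D.lie (Bs.u β) (Bs.u α))) = -R.cubic R.φc := by
    rw [← R.sum_ghost_mul_ceDiff_flip_lie]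
    exact Finset.sum_congr rfl fun α _ => by
      rw [← Finset.mul_sum, R.sum_ceDiff_coord_mul_φc α]
  rw [ceDiff_ghostCurrent, ghost_action, R.cubic_eq_zero, neg_zero, smul_zero, sub_zero] at h
  exact hasBr_zero_iff.1 h

/-- A classical moment map of `n`: a parity-preserving linear map `W` from `g` to `A` whose values
on `n` commute with the ghosts and satisfy `{W(a)_λ W(b)} = W([a, b])`. -/
structure IsMomentMap (W : g →ₗ[ℂ] A) : Prop where
  parity : ∀ a, P.σ (W a) = W (D.σg a)
  φc_map : ∀ α ∈ Bs.S, ∀ β ∈ Bs.S, P.HasBr (R.φc (Bs.u α)) (W (Bs.u β)) 0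
  ghost_map : ∀ α, ∀ β ∈ Bs.S, P.HasBr (R.ghost α) (W (Bs.u β)) 0
  map_map : ∀ α ∈ Bs.S, ∀ β ∈ Bs.S,
    P.HasBr (W (Bs.u α)) (W (Bs.u β)) (W (D.lie (Bs.u α) (Bs.u β)))

/-- The BRST charge `∑_α φ^α W(u_α) + (1/2) ∑_{α,β} (-1)^{p(α)} φ^α φ^β φ_{[u_β, u_α]}` of `W`. -/
def charge (W : g →ₗ[ℂ] A) : A := R.coupling W + (1 / 2 : ℂ) • R.ceDiff R.φc

lemma hasParity_charge {W : g →ₗ[ℂ] A} (hW : ∀ a, P.σ (W a) = W (D.σg a)) :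
    HasParity P.σ 1 (R.charge W) :=
  hasParity_add (R.hasParity_coupling hW) (hasParity_smul _ R.hasParity_ceDiff_φc)

namespace IsMomentMap

variable {R} {W : g →ₗ[ℂ] A} (hW : R.IsMomentMap W)

include hW

lemma hasBr_coupling_ghost (γ : I) : P.HasBr (R.coupling W) (R.ghost γ) 0 := by
  refine .swap_zero (R.hasParity_ghost γ) (R.hasParity_coupling hW.parity) ?_
  simpa using R.hasBr_coupling (R.hasParity_ghost γ) (fun α _ => R.hasBr_ghost_ghost γ α)
    (fun α hα => hW.ghost_map γ α hα)

lemma hasBr_coupling_φc {γ : I} (hγ : γ ∈ Bs.S) :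
    P.HasBr (R.coupling W) (R.φc (Bs.u γ)) (paritySign (Bs.parity γ) • W (Bs.u γ)) := by
  have φc_coupling : P.HasBr (R.φc (Bs.u γ)) (R.coupling W) (W (Bs.u γ)) := by
    simpa [hγ] using R.hasBr_coupling (R.hasParity_φc (Bs.hasParity_u γ))
      (fun α hα => R.hasBr_φc_ghost hγ hα) (fun α hα => hW.φc_map γ hγ α hα)
  have h := φc_coupling.swap (R.hasParity_φc (Bs.hasParity_u γ)) (R.hasParity_coupling hW.parity)
  have sign_identity : ∀ p : ZMod 2, (p + 1) * 1 + 1 = p := by decide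
  rwa [sign_identity] at h

lemma hasBr_coupling_map {γ : I} (hγ : γ ∈ Bs.S) :
    P.HasBr (R.coupling W) (W (Bs.u γ))
      (∑ α ∈ Bs.S, R.ghost α * W (D.lie (Bs.u α) (Bs.u γ))) := by
  have hγ_parity := hasParity_map hW.parity (Bs.hasParity_u γ)
  have h := (R.hasBr_coupling hγ_parity (fun α _ => .swap_zero (R.hasParity_ghost α) hγ_parity
    (hW.ghost_map α γ hγ)) (hW.map_map γ hγ)).swap hγ_parity (R.hasParity_coupling hW.parity)
  convert h using 1
  rw [Finset.smul_sum]
  refine Finset.sum_congr rfl fun α _ => ?_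
  have sign_identity : ∀ p q : ZMod 2, p * 1 + 1 + p * (q + 1) + (p * q + 1) = 0 := by decide
  rw [zero_mul, zero_add, map_lie_u_swap W γ α, mul_smul_comm, smul_smul, smul_smul,
    ← paritySign_add, ← paritySign_add, sign_identity, paritySign_zero, one_smul]

lemma hasBr_coupling_coupling : P.HasBr (R.coupling W) (R.coupling W) (-R.ceDiff W) := by
  convert R.hasBr_coupling (R.hasParity_coupling hW.parity)
    (fun α _ => hW.hasBr_coupling_ghost α) (fun α hα => hW.hasBr_coupling_map hα) using 1
  simp only [ceDiff, ← Finset.sum_neg_distrib, Finset.mul_sum, Finset.smul_sum, zero_mul, zero_add]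
  refine Finset.sum_congr rfl fun α _ => Finset.sum_congr rfl fun β _ => ?_
  rw [one_mul, paritySign_add, paritySign_one, mul_neg_one, neg_smul]

lemma hasBr_coupling_ceDiff_φc : P.HasBr (R.coupling W) (R.ceDiff R.φc) (R.ceDiff W) := by
  simpa using R.hasBr_odd_ceDiff_φc (R.hasParity_coupling hW.parity)
    (fun γ _ => hW.hasBr_coupling_ghost γ) (fun γ hγ => hW.hasBr_coupling_φc hγ)

theorem br_charge_charge : P.Br (R.charge W) (R.charge W) = 0 := by
  have coupling_half := hW.hasBr_coupling_ceDiff_φc.smul (1 / 2)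
  have half_coupling : P.HasBr ((1 / 2 : ℂ) • R.ceDiff R.φc) (R.coupling W)
      ((1 / 2 : ℂ) • R.ceDiff W) := by
    simpa [CharTwo.add_self_eq_zero] using coupling_half.swap (R.hasParity_coupling hW.parity)
      (hasParity_smul _ R.hasParity_ceDiff_φc)
  have half_half := ((hasBr_zero_iff.2 R.br_ceDiff_φc_ceDiff_φc).smul (1 / 2)).smul_left (1 / 2)
  have h := (hW.hasBr_coupling_coupling.add coupling_half).add_left (half_coupling.add half_half)
  rw [HasBr] at h
  rw [charge, h, C_eq_zero]
  module

end IsMomentMap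

lemma hasBr_ι_ι {i j : ℚ} {a b : g} (ha : a ∈ D.gwt i) (hb : b ∈ D.gwt j) (hij : i + j ≠ 0) :
    P.HasBr (R.ι a) (R.ι b) (R.ι (D.lie a b)) := by
  rw [HasBr, R.br_cur, D.form_eq_zero_of_gwt ha hb hij, mul_zero, map_zero, map_zero, add_zero]

lemma hasBr_Φn_Φn {i j : ℚ} {a b : g} (ha : a ∈ D.gwt i) (hb : b ∈ D.gwt j) (hi : 0 < i)
    (hj : 0 < j) :
    P.HasBr (R.Φn a) (R.Φn b) (algebraMap ℂ A (D.form (D.lie a b) D.f)) := by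
  rw [← D.form_f_lie]
  by_cases hij : i = 1 / 2 ∧ j = 1 / 2
  · obtain ⟨rfl, rfl⟩ := hij
    exact R.br_ΦΦ a ha b hb
  · rw [Bs.form_f_lie_eq_zero ha hb hi hj hij, map_zero, hasBr_zero_iff]
    rcases not_and_or.1 hij with hi' | hj'
    · rw [R.Φn_proj i hi' a ha, map_zero, LinearMap.zero_apply]
    · rw [R.Φn_proj j hj' b hb, map_zero]

lemma Φn_lie_u {α β : I} (hα : α ∈ Bs.S) (hβ : β ∈ Bs.S) :
    R.Φn (D.lie (Bs.u α) (Bs.u β)) = 0 := by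
  refine R.Φn_proj _ (fun h => ?_) _ (Bs.lie_u_mem_gwt α β)
  linarith [Bs.half_le_jdeg hα, Bs.half_le_jdeg hβ]

/-- The moment map `a ↦ (-1)^{p(a)} a + Φ_a + (a|f)` of the classical BRST complex. -/
def moment : g →ₗ[ℂ] A :=
  R.ι ∘ₗ D.σg + R.Φn + Algebra.linearMap ℂ A ∘ₗ D.form.flip D.f

lemma moment_apply {p : ZMod 2} {a : g} (ha : HasParity D.σg p a) :
    R.moment a = paritySign p • R.ι a + R.Φn a + algebraMap ℂ A (D.form a D.f) := by
  rw [HasParity] at ha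
  simp [moment, ha]

lemma hasBr_moment_eq_zero {p q : ZMod 2} {c : A} {a : g} (hc : HasParity P.σ p c)
    (ha : HasParity D.σg q a) (hι : P.Br (R.ι a) c = 0) (hΦ : P.Br c (R.Φn a) = 0) :
    P.HasBr c (R.moment a) 0 := by
  have c_ι : P.HasBr c (R.ι a) 0 :=
    .swap_zero (hasParity_map R.σι ha) hc (hasBr_zero_iff.2 hι)
  rw [R.moment_apply ha]
  simpa using ((c_ι.smul (paritySign q)).add (hasBr_zero_iff.2 hΦ)).add (hasBr_algebraMap _ _)

lemma hasBr_moment_moment {α β : I} (hα : α ∈ Bs.S) (hβ : β ∈ Bs.S) :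
    P.HasBr (R.moment (Bs.u α)) (R.moment (Bs.u β)) (R.moment (D.lie (Bs.u α) (Bs.u β))) := by
  have huα := Bs.hasParity_u α
  have hΦα := hasParity_map R.σΦ huα
  have ι_ι := R.hasBr_ι_ι (Bs.hu α) (Bs.hu β) (Bs.jdeg_add_pos hα hβ).ne'
  have Φn_Φn := R.hasBr_Φn_Φn (Bs.hu α) (Bs.hu β) (Bs.mem_S.1 hα) (Bs.mem_S.1 hβ)
  have ι_Φn (γ δ : I) : P.HasBr (R.ι (Bs.u γ)) (R.Φn (Bs.u δ)) 0 :=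
    hasBr_zero_iff.2 (R.br_curΦ _ _)
  have Φn_ι : P.HasBr (R.Φn (Bs.u α)) (R.ι (Bs.u β)) 0 :=
    (ι_Φn β α).swap_zero (hasParity_map R.σι (Bs.hasParity_u β)) hΦα
  rw [R.moment_apply huα, R.moment_apply (Bs.hasParity_u β),
    R.moment_apply (Bs.hasParity_lie_u α β), R.Φn_lie_u hα hβ, paritySign_add]
  have ι_moment := (((ι_ι.smul (paritySign (Bs.parity β))).add (ι_Φn α β)).add
    (hasBr_algebraMap _ (D.form (Bs.u β) D.f))).smul_left (paritySign (Bs.parity α))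
  have Φn_moment := ((Φn_ι.smul (paritySign (Bs.parity β))).add Φn_Φn).add
    (hasBr_algebraMap _ (D.form (Bs.u β) D.f))
  convert (ι_moment.add_left Φn_moment).add_left (algebraMap_hasBr _ _) using 1
  module

lemma isMomentMap_moment : R.IsMomentMap R.moment where
  parity a := by
    have form_σg : D.form (D.σg a) D.f = D.form a D.f := by
      simpa [D.f_even] using D.form_super a D.f
    simp [moment, R.σι, R.σΦ, form_σg]
  φc_map α _ β _ := R.hasBr_moment_eq_zero (R.hasParity_φc (Bs.hasParity_u α))
    (Bs.hasParity_u β) (R.br_curφc _ _) (R.br_φcΦ _ _)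
  ghost_map α β _ := R.hasBr_moment_eq_zero (R.hasParity_ghost α) (Bs.hasParity_u β)
    (R.br_curφd _ _) (R.br_φdΦ _ _)
  map_map _ hα _ hβ := R.hasBr_moment_moment hα hβ

lemma φd_f_eq_sum : R.φd D.f = ∑ α ∈ Bs.S, R.ghost α * algebraMap ℂ A (D.form (Bs.u α) D.f) := by
  have ghost_eq_zero (α : I) (hα : α ∉ Bs.S) : R.ghost α = 0 :=
    R.φd_proj _ (by linarith [not_lt.1 (mt Bs.mem_S.2 hα)]) _ (Bs.hud α)
  calc R.φd D.f = ∑ α, R.ghost α * algebraMap ℂ A (D.form (Bs.u α) D.f) := by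
        conv_lhs => rw [← Bs.sum_form_smul_udual D.f, map_sum]
        simp only [map_smul, Algebra.smul_def, Algebra.commutes, ghost]
    _ = ∑ α ∈ Bs.S, R.ghost α * algebraMap ℂ A (D.form (Bs.u α) D.f) :=
        (Finset.sum_subset (Finset.subset_univ _) fun α _ hα => by
          rw [ghost_eq_zero α hα, zero_mul]).symm

lemma sum_Shalf_ghost_mul_Φn :
    ∑ α ∈ Bs.Shalf, R.ghost α * R.Φn (Bs.u α) = ∑ α ∈ Bs.S, R.ghost α * R.Φn (Bs.u α) := by
  refine Finset.sum_subset (fun α hα => ?_) fun α _ hα => ?_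
  · rw [Bs.mem_S, Bs.mem_Shalf.1 hα]
    norm_num
  · rw [R.Φn_proj _ (mt Bs.mem_Shalf.2 hα) _ (Bs.hu α), mul_zero]

lemma dd_eq_charge_moment : R.dd = R.charge R.moment := by
  have coupling_moment : R.coupling R.moment =
      ∑ α ∈ Bs.S, Bs.sgn α • (R.ghost α * R.ι (Bs.u α)) +
        ∑ α ∈ Bs.Shalf, R.ghost α * R.Φn (Bs.u α) + R.φd D.f := by
    simp only [R.sum_Shalf_ghost_mul_Φn, R.φd_f_eq_sum, coupling,
      R.moment_apply (Bs.hasParity_u _), mul_add, mul_smul_comm, Finset.sum_add_distrib,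
      Bs.sgn_eq_paritySign]
  rw [charge, coupling_moment]
  simp only [dd, ceDiff, ghost, Bs.sgn_eq_paritySign]

end BRST

/-- The element
`d = ∑_{α∈S} (-1)^{p(α)} φ^α u_α + ∑_{α∈S(1/2)} φ^α Φ_α + φ^f
  + (1/2) ∑_{α,β∈S} (-1)^{p(α)} φ^α φ^β φ_{[u_β,u_α]}`
of the Poisson vertex algebra `S(R)` has odd parity and satisfies `{d_λ d} = 0`. -/
theorem statement0
    (g : Type) [AddCommGroup g] [Module ℂ g] (D : SuperSetup g)
    (I : Type) [Fintype I] [DecidableEq I] (Bs : BasisData D I)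
    (A : Type) [Ring A] [Algebra ℂ A] (P : PVA A) (k : ℂ)
    (R : BRST D Bs P k) :
    P.σ R.dd = - R.dd ∧ P.Br R.dd R.dd = 0 := by
  rw [R.dd_eq_charge_moment, ← hasParity_one_iff]
  exact ⟨R.hasParity_charge R.isMomentMap_moment.parity, R.isMomentMap_moment.br_charge_charge⟩
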